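/- Let p > 0, b > 0, θ ∈ ℝ, ρ ∈ (−1, 1). Let W have the Gamma distribution of shape p and rate b²/2 (density (b²/2)^p·w^{p−1}·e^{−(b²/2)w}/Γ(p) on (0,∞)), independent of (Z₁, Z₂) having the bivariate standard normal density with correlation ρ, and set X_i = θW + √W·Z_i for i = 1, 2. Set α = √((1−ρ)/(1+ρ)), β = √(θ²(1+α²) + b²), γ = β + θ√(1+α²), K̄ = 2^{p−1}·b^{−2p}·Γ(p), and C₃ = (1+α²)^{(2p−3)/4}/(√(2π)·K̄·β^{p−1/2}·α·γ²). Then P(X₁ ≤ y, X₂ ≤ y) = C₃·|y|^{p−3/2}·e^{−√(1+α²)·γ·|y|}·(1 + O(1/|y|)) as y → −∞; that is, there exist M > 0 and y₀ < 0 such that for all y ≤ y₀, |P(X₁ ≤ y, X₂ ≤ y)/(C₃|y|^{p−3/2}e^{−√(1+α²)γ|y|}) − 1| ≤ M/|y|. -/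

import Mathlib

open MeasureTheory Real Set

/-!
Conditionally on `W` the vector `(X₁, X₂)` is Gaussian, so its density is a mixture over `W`, and
the mixing integral is a Macdonald function evaluated at `β * S`, where `S` is the Mahalanobis norm
of `x`. On the quadrant `x₁, x₂ ≤ -t` write `s` for the mean of the coordinates, `r = -s - t ≥ 0`
and `k = √(1 + α²)`. Half the difference of the coordinates is at most `r` in absolute value, so `S`
exceeds `k * |s|` by only `O(r² / t)`. Together with the leading Hankel term of the Macdonald
function this shows that the density is `N * t ^ (p - 3 / 2) * exp (k * γ * s)` up to a factor
`exp (O((1 + r)² / t))`. The exponential weight absorbs the powers of `r`, and integrating the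
leading exponential over the quadrant gives the main term with relative error `O(1 / t)`.
-/

/-- The modified Bessel function of the second kind (Macdonald function) `K_ν(x)`, given by its
integral representation over the whole line; only `0 < x` is meaningful, as the integral diverges
(and hence has the value `0`) otherwise. -/
noncomputable def besselK (ν x : ℝ) : ℝ :=
  (∫ u : ℝ, exp (ν * u - x * cosh u)) / 2

lemma cosh_eq_one_add_two_mul_sinh_half_sq (u : ℝ) : cosh u = 1 + 2 * sinh (u / 2) ^ 2 := by
  have h := cosh_two_mul (u / 2)
  rw [mul_div_cancel₀ u two_ne_zero, cosh_sq] at h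
  linarith

lemma sq_le_sinh_sq (u : ℝ) : u ^ 2 ≤ sinh u ^ 2 := by
  rw [sq_le_sq, abs_sinh]
  exact self_le_sinh_iff.2 (abs_nonneg u)

lemma one_add_sq_div_two_le_cosh (u : ℝ) : 1 + u ^ 2 / 2 ≤ cosh u := by
  rw [cosh_eq_one_add_two_mul_sinh_half_sq]
  linarith [sq_le_sinh_sq (u / 2)]

lemma cosh_le_exp_sinh_sq_div_two (u : ℝ) : cosh u ≤ exp (sinh u ^ 2 / 2) := by
  refine le_of_sq_le_sq ?_ (exp_pos _).le
  rw [cosh_sq, ← exp_nat_mul, Nat.cast_two, mul_div_cancel₀ _ two_ne_zero]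
  exact add_one_le_exp _

section BesselK

variable {x : ℝ}

lemma exp_mul_sub_mul_cosh_le (ν u : ℝ) (hx : 0 < x) :
    exp (ν * u - x * cosh u) ≤
      exp (-x) * exp (ν ^ 2 / (2 * x)) * exp (-(x / 2) * (u - ν / x) ^ 2) := by
  rw [← exp_add, ← exp_add, exp_le_exp]
  calc ν * u - x * cosh u ≤ ν * u - x * (1 + u ^ 2 / 2) := by
        gcongr
        exact one_add_sq_div_two_le_cosh u
    _ = -x + ν ^ 2 / (2 * x) + -(x / 2) * (u - ν / x) ^ 2 := by
        field_simp
        ring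

lemma integrable_exp_neg_mul_sub_sq {b : ℝ} (hb : 0 < b) (c : ℝ) :
    Integrable fun u : ℝ => exp (-b * (u - c) ^ 2) :=
  (integrable_exp_neg_mul_sq hb).comp_sub_right c

lemma integrable_exp_mul_sub_mul_cosh (ν : ℝ) (hx : 0 < x) :
    Integrable fun u : ℝ => exp (ν * u - x * cosh u) := by
  refine ((integrable_exp_neg_mul_sub_sq (half_pos hx) (ν / x)).const_mul
    (exp (-x) * exp (ν ^ 2 / (2 * x)))).mono' (by fun_prop) (.of_forall fun u => ?_)
  rw [norm_of_nonneg (exp_pos _).le]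
  exact exp_mul_sub_mul_cosh_le ν u hx

lemma besselK_le (ν : ℝ) (hx : 0 < x) :
    besselK ν x ≤ √(π / (2 * x)) * exp (-x) * exp (ν ^ 2 / (2 * x)) := by
  have hsqrt : √(π / (x / 2)) = 2 * √(π / (2 * x)) := by
    rw [show π / (x / 2) = 2 ^ 2 * (π / (2 * x)) by field_simp,
      sqrt_mul (by positivity), sqrt_sq two_pos.le]
  rw [besselK, div_le_iff₀ two_pos]
  calc ∫ u, exp (ν * u - x * cosh u)
      ≤ ∫ u, exp (-x) * exp (ν ^ 2 / (2 * x)) * exp (-(x / 2) * (u - ν / x) ^ 2) :=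
        integral_mono (integrable_exp_mul_sub_mul_cosh ν hx)
          ((integrable_exp_neg_mul_sub_sq (half_pos hx) _).const_mul _)
          fun u => exp_mul_sub_mul_cosh_le ν u hx
    _ = exp (-x) * exp (ν ^ 2 / (2 * x)) * √(π / (x / 2)) := by
        rw [integral_const_mul, integral_sub_right_eq_self (fun u => exp (-(x / 2) * u ^ 2)),
          integral_gaussian]
    _ = √(π / (2 * x)) * exp (-x) * exp (ν ^ 2 / (2 * x)) * 2 := by
        rw [hsqrt]
        ring

lemma besselK_zero_le_besselK (ν : ℝ) (hx : 0 < x) : besselK 0 x ≤ besselK ν x := by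
  have hreflect : ∫ u, exp (-(ν * u) - x * cosh u) = ∫ u, exp (ν * u - x * cosh u) := by
    rw [← integral_neg_eq_self]
    simp
  have hint := integrable_exp_mul_sub_mul_cosh ν hx
  have hint' : Integrable fun u : ℝ => exp (-(ν * u) - x * cosh u) := by
    simpa using integrable_exp_mul_sub_mul_cosh (-ν) hx
  have hmean : ∫ u, exp (ν * u - x * cosh u) =
      ∫ u, (exp (ν * u - x * cosh u) + exp (-(ν * u) - x * cosh u)) / 2 := by
    rw [integral_div, integral_add hint hint', hreflect]
    ring
  rw [besselK, besselK, hmean]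
  refine div_le_div_of_nonneg_right (integral_mono (integrable_exp_mul_sub_mul_cosh 0 hx)
    ((hint.add hint').div_const 2) fun u => ?_) two_pos.le
  calc exp (0 * u - x * cosh u) = 1 * exp (-(x * cosh u)) := by simp
    _ ≤ cosh (ν * u) * exp (-(x * cosh u)) := by
        gcongr
        exact one_le_cosh _
    _ = (exp (ν * u - x * cosh u) + exp (-(ν * u) - x * cosh u)) / 2 := by
        rw [cosh_eq, sub_eq_add_neg, sub_eq_add_neg, exp_add, exp_add]
        ring

lemma integral_cosh_mul_comp_sinh (g : ℝ → ℝ) :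
    ∫ u, cosh u * g (sinh u) = ∫ s, g s := by
  have h := integral_image_eq_integral_abs_deriv_smul MeasurableSet.univ
    (fun u _ => (hasDerivAt_sinh u).hasDerivWithinAt) sinh_injective.injOn g
  simpa only [image_univ, sinh_surjective.range_eq, Measure.restrict_univ, smul_eq_mul,
    abs_of_pos (cosh_pos _)] using h.symm

lemma sqrt_mul_exp_neg_le (hx : 0 < x) :
    √(π / (2 * x)) * exp (-(1 / (8 * x))) ≤ √(π / (2 * x + 1 / 2)) := by
  refine le_sqrt_of_sq_le ?_
  have hexp : exp (-(1 / (8 * x))) ^ 2 = (exp (1 / (4 * x)))⁻¹ := by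
    rw [← exp_nat_mul, ← exp_neg]
    congr 1
    push_cast
    field_simp
    norm_num
  calc (√(π / (2 * x)) * exp (-(1 / (8 * x)))) ^ 2
      = π / (2 * x) * (exp (1 / (4 * x)))⁻¹ := by rw [mul_pow, sq_sqrt (by positivity), hexp]
    _ ≤ π / (2 * x) * (1 / (4 * x) + 1)⁻¹ := by
        gcongr
        exact add_one_le_exp _
    _ = π / (2 * x + 1 / 2) := by
        field_simp
        ring

-- The substitution `s = sinh (u / 2)` turns the exponent of `K_0` into an exact Gaussian; its
-- Jacobian `cosh (u / 2)` is paid for by `cosh ≤ exp (sinh² / 2)`.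
lemma le_besselK_zero (hx : 0 < x) :
    √(π / (2 * x)) * exp (-x) * exp (-(1 / (8 * x))) ≤ besselK 0 x := by
  have hpoint (u : ℝ) : cosh u * exp (-(2 * x + 1 / 2) * sinh u ^ 2) ≤
      exp (-(2 * x) * sinh u ^ 2) := by
    calc cosh u * exp (-(2 * x + 1 / 2) * sinh u ^ 2)
        ≤ exp (sinh u ^ 2 / 2) * exp (-(2 * x + 1 / 2) * sinh u ^ 2) := by
          gcongr
          exact cosh_le_exp_sinh_sq_div_two u
      _ = exp (-(2 * x) * sinh u ^ 2) := by
          rw [← exp_add]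
          congr 1
          ring
  have hint : Integrable fun u => exp (-(2 * x) * sinh u ^ 2) := by
    refine (integrable_exp_neg_mul_sq (b := 2 * x) (by positivity)).mono' (by fun_prop)
      (.of_forall fun u => ?_)
    rw [norm_of_nonneg (exp_pos _).le, exp_le_exp]
    nlinarith [sq_le_sinh_sq u]
  have hhalf : besselK 0 x = exp (-x) * ∫ u, exp (-(2 * x) * sinh u ^ 2) := by
    have hscale := Measure.integral_comp_div (fun u => exp (-(2 * x) * sinh u ^ 2)) 2
    have hfactor (u : ℝ) :
        exp (0 * u - x * cosh u) = exp (-x) * exp (-(2 * x) * sinh (u / 2) ^ 2) := by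
      rw [← exp_add, cosh_eq_one_add_two_mul_sinh_half_sq]
      congr 1
      ring
    simp only [besselK, hfactor]
    rw [integral_const_mul, hscale, abs_two, smul_eq_mul]
    ring
  rw [hhalf, mul_right_comm, mul_comm]
  gcongr
  calc √(π / (2 * x)) * exp (-(1 / (8 * x))) ≤ √(π / (2 * x + 1 / 2)) := sqrt_mul_exp_neg_le hx
    _ = ∫ u, cosh u * exp (-(2 * x + 1 / 2) * sinh u ^ 2) := by
        rw [integral_cosh_mul_comp_sinh fun s => exp (-(2 * x + 1 / 2) * s ^ 2),
          integral_gaussian]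
    _ ≤ ∫ u, exp (-(2 * x) * sinh u ^ 2) :=
        integral_mono_of_nonneg (.of_forall fun u => by positivity [cosh_pos u]) hint
          (.of_forall hpoint)

lemma abs_log_besselK_div_le (ν : ℝ) (hx : 0 < x) :
    |log (besselK ν x / (√(π / (2 * x)) * exp (-x)))| ≤ (ν ^ 2 / 2 + 1 / 8) / x := by
  set lead := √(π / (2 * x)) * exp (-x)
  have hlead : 0 < lead := by positivity
  have hlower : exp (-(1 / (8 * x))) ≤ besselK ν x / lead := by
    rw [le_div_iff₀' hlead]
    exact (le_besselK_zero hx).trans (besselK_zero_le_besselK ν hx)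
  have hupper : besselK ν x / lead ≤ exp (ν ^ 2 / (2 * x)) := by
    rw [div_le_iff₀' hlead]
    exact besselK_le ν hx
  have hpos : 0 < besselK ν x / lead := (exp_pos _).trans_le hlower
  have hsplit : (ν ^ 2 / 2 + 1 / 8) / x = ν ^ 2 / (2 * x) + 1 / (8 * x) := by
    field_simp
  have hν : 0 ≤ ν ^ 2 / (2 * x) := by positivity
  have hx' : 0 ≤ 1 / (8 * x) := by positivity
  rw [abs_le, hsplit]
  constructor
  · linarith [(le_log_iff_exp_le hpos).2 hlower]
  · linarith [(log_le_iff_le_exp hpos).2 hupper]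

lemma besselK_pos (ν : ℝ) (hx : 0 < x) : 0 < besselK ν x := by
  have h := le_besselK_zero hx
  exact lt_of_lt_of_le (by positivity) (h.trans (besselK_zero_le_besselK ν hx))

end BesselK

-- Substitute `w = (S / B) * exp u`.
lemma integral_Ioi_rpow_mul_exp_eq_besselK (m : ℝ) {B S : ℝ} (hB : 0 < B) (hS : 0 < S) :
    ∫ w in Ioi (0 : ℝ), w ^ (m - 1) * exp (-(B ^ 2 * w / 2) - S ^ 2 / (2 * w)) =
      2 * (S / B) ^ m * besselK m (B * S) := by
  have hk : 0 < S / B := by positivity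
  have hrange : (fun u : ℝ => S / B * exp u) '' univ = Ioi 0 := by
    ext w
    simp only [image_univ, mem_range, mem_Ioi]
    refine ⟨fun ⟨u, hu⟩ => hu ▸ by positivity, fun hw => ⟨log (w / (S / B)), ?_⟩⟩
    rw [exp_log (by positivity), mul_div_cancel₀ _ hk.ne']
  have hsubst := integral_image_eq_integral_abs_deriv_smul MeasurableSet.univ
    (fun u _ => ((hasDerivAt_exp u).const_mul (S / B)).hasDerivWithinAt)
    ((mul_right_injective₀ hk.ne').comp exp_injective).injOn
    (fun w => w ^ (m - 1) * exp (-(B ^ 2 * w / 2) - S ^ 2 / (2 * w)))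
  rw [← hrange, hsubst, Measure.restrict_univ, besselK, mul_right_comm,
    mul_div_cancel₀ _ two_ne_zero, mul_comm, ← integral_const_mul]
  refine integral_congr_ae (.of_forall fun u => ?_)
  have hexponent : -(B ^ 2 * (S / B * exp u) / 2) - S ^ 2 / (2 * (S / B * exp u)) =
      -(B * S * cosh u) := by
    rw [cosh_eq, exp_neg]
    field_simp
    ring
  simp only [smul_eq_mul]
  rw [abs_of_pos (by positivity), ← mul_assoc, mul_comm (S / B * exp u),
    rpow_sub_one (by positivity), div_mul_cancel₀ _ (by positivity), hexponent,
    mul_rpow hk.le (exp_pos u).le, ← exp_mul, mul_assoc, ← exp_add, mul_comm u, ← sub_eq_add_neg]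

section NormalMixture

variable {E : Type*} [NormedAddCommGroup E] [NormedSpace ℝ E] [FiniteDimensional ℝ E]
  [MeasurableSpace E] [BorelSpace E] (μ : Measure E) [μ.IsAddHaarMeasure]

lemma lintegral_comp_smul_add {s : ℝ} (hs : s ≠ 0) (a : E) {g : E → ENNReal}
    (hg : Measurable g) :
    ∫⁻ z, g (s • z + a) ∂μ =
      ENNReal.ofReal |(s ^ Module.finrank ℝ E)⁻¹| * ∫⁻ x, g x ∂μ := by
  rw [← lintegral_map (f := fun y => g (y + a)) (by fun_prop) (measurable_const_smul s),
    Measure.map_addHaar_smul μ hs, lintegral_smul_measure, lintegral_add_right_eq_self,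
    smul_eq_mul]

lemma withDensity_preimage_smul_add {s : ℝ} (hs : s ≠ 0) (a : E) {φ : E → ENNReal}
    (hφ : Measurable φ) {A : Set E} (hA : MeasurableSet A) :
    μ.withDensity φ ((fun z => s • z + a) ⁻¹' A) =
      ∫⁻ x in A, ENNReal.ofReal |(s ^ Module.finrank ℝ E)⁻¹| * φ (s⁻¹ • (x - a)) ∂μ := by
  have hpre : MeasurableSet ((fun z : E => s • z + a) ⁻¹' A) :=
    (show Measurable fun z : E => s • z + a by fun_prop) hA
  have hφ' : Measurable fun x => φ (s⁻¹ • (x - a)) := by fun_prop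
  rw [withDensity_apply _ hpre, ← lintegral_indicator hpre, lintegral_const_mul _ hφ',
    ← lintegral_indicator hA, ← lintegral_comp_smul_add μ hs a (hφ'.indicator hA)]
  refine lintegral_congr fun z => ?_
  simp only [indicator, add_sub_cancel_right, inv_smul_smul₀ hs]
  rfl

variable {Ω : Type*} [MeasurableSpace Ω] {P : Measure Ω} [IsFiniteMeasure P]

theorem map_sqrt_smul_add_smul_eq_withDensity {W : Ω → ℝ} {Z : Ω → E} (hW : Measurable W)
    (hZ : Measurable Z) (hWpos : ∀ᵐ w ∂P.map W, 0 < w) {φ : E → ENNReal} (hφ : Measurable φ)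
    (hZlaw : P.map Z = μ.withDensity φ) (hindep : ProbabilityTheory.IndepFun W Z P) (v : E) :
    P.map (fun ω => √(W ω) • Z ω + W ω • v) =
      μ.withDensity fun x => ∫⁻ w, ENNReal.ofReal |(√w ^ Module.finrank ℝ E)⁻¹| *
        φ ((√w)⁻¹ • (x - w • v)) ∂P.map W := by
  set T : ℝ × E → E := fun y => √y.1 • y.2 + y.1 • v
  have hT : Measurable T := by fun_prop
  have hkernel : Measurable fun y : ℝ × E =>
      ENNReal.ofReal |(√y.1 ^ Module.finrank ℝ E)⁻¹| * φ ((√y.1)⁻¹ • (y.2 - y.1 • v)) := by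
    fun_prop
  have hpair := (ProbabilityTheory.indepFun_iff_map_prod_eq_prod_map_map hW.aemeasurable
    hZ.aemeasurable).1 hindep
  ext A hA
  rw [withDensity_apply _ hA]
  calc P.map (fun ω => √(W ω) • Z ω + W ω • v) A
      = P.map (fun ω => (W ω, Z ω)) (T ⁻¹' A) := by
        rw [← Measure.map_apply hT hA, Measure.map_map hT (hW.prodMk hZ)]
        rfl
    _ = ∫⁻ w, μ.withDensity φ ((fun z => √w • z + w • v) ⁻¹' A) ∂P.map W := by
        rw [hpair, Measure.prod_apply (hT hA), hZlaw]
        rfl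
    _ = ∫⁻ w, ∫⁻ x in A, ENNReal.ofReal |(√w ^ Module.finrank ℝ E)⁻¹| *
          φ ((√w)⁻¹ • (x - w • v)) ∂μ ∂P.map W := by
        refine lintegral_congr_ae (hWpos.mono fun w hw => ?_)
        exact withDensity_preimage_smul_add μ (sqrt_pos.2 hw).ne' (w • v) hφ hA
    _ = ∫⁻ x in A, ∫⁻ w, ENNReal.ofReal |(√w ^ Module.finrank ℝ E)⁻¹| *
          φ ((√w)⁻¹ • (x - w • v)) ∂P.map W ∂μ :=
        lintegral_lintegral_swap hkernel.aemeasurable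

end NormalMixture

lemma measureReal_eq_setIntegral_toReal {X : Type*} [MeasurableSpace X] {ν μ : Measure X}
    [IsFiniteMeasure ν] {h : X → ENNReal} (hh : Measurable h) (hν : ν = μ.withDensity h)
    {A : Set X} (hA : MeasurableSet A) : ν.real A = ∫ x in A, (h x).toReal ∂μ := by
  have hνA : ν A = ∫⁻ x in A, h x ∂μ := by rw [hν, withDensity_apply _ hA]
  rw [measureReal_def, hνA, integral_toReal hh.aemeasurable]
  exact ae_lt_top hh (hνA ▸ measure_ne_top ν A)

/-- The squared Mahalanobis norm `xᵀ R⁻¹ x` for the correlation matrix `R` with off-diagonal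
entry `ρ`. -/
noncomputable def mahalanobisSq (ρ : ℝ) (x : ℝ × ℝ) : ℝ :=
  (x.1 ^ 2 - 2 * ρ * x.1 * x.2 + x.2 ^ 2) / (1 - ρ ^ 2)

/-- The density of the standard bivariate normal law with correlation `ρ`. -/
noncomputable def bivariateNormalPDF (ρ : ℝ) (x : ℝ × ℝ) : ℝ :=
  (2 * π * √(1 - ρ ^ 2))⁻¹ * exp (-(mahalanobisSq ρ x / 2))

/-- The Mahalanobis norm of `(1, 1)`; this is `√(1 + α²)` in the notation of the paper. -/
noncomputable def diagonalNorm (ρ : ℝ) : ℝ := √(2 / (1 + ρ))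

/-- The argument scale of the Bessel function in the density of the equi-skew variance-gamma
law, written `β` in the paper. -/
noncomputable def besselRate (b θ ρ : ℝ) : ℝ := √(θ ^ 2 * diagonalNorm ρ ^ 2 + b ^ 2)

/-- The density of the equi-skew law `GH(0, R, (θ, θ), p, 0, b)`, valid away from the origin. -/
noncomputable def equiSkewPDF (p b θ ρ : ℝ) (x : ℝ × ℝ) : ℝ :=
  (b ^ 2 / 2) ^ p / Gamma p * (2 * π * √(1 - ρ ^ 2))⁻¹ *
    exp (diagonalNorm ρ ^ 2 * θ * ((x.1 + x.2) / 2)) *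
    (2 * (√(mahalanobisSq ρ x) / besselRate b θ ρ) ^ (p - 1) *
      besselK (p - 1) (besselRate b θ ρ * √(mahalanobisSq ρ x)))

lemma bivariateNormalPDF_eq (ρ : ℝ) (x : ℝ × ℝ) :
    bivariateNormalPDF ρ x = (2 * π * √(1 - ρ ^ 2))⁻¹ *
      exp (-(x.1 ^ 2 - 2 * ρ * x.1 * x.2 + x.2 ^ 2) / (2 * (1 - ρ ^ 2))) := by
  rw [bivariateNormalPDF, mahalanobisSq, div_div, neg_div, mul_comm 2 (1 - ρ ^ 2)]

lemma measurable_bivariateNormalPDF (ρ : ℝ) : Measurable (bivariateNormalPDF ρ) := by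
  unfold bivariateNormalPDF mahalanobisSq
  fun_prop

lemma bivariateNormalPDF_nonneg (ρ : ℝ) (x : ℝ × ℝ) : 0 ≤ bivariateNormalPDF ρ x := by
  unfold bivariateNormalPDF
  positivity

section Correlation

variable {ρ : ℝ}

lemma diagonalNorm_pos (hρ : -1 < ρ) : 0 < diagonalNorm ρ := by
  have : 0 < 1 + ρ := by linarith
  unfold diagonalNorm
  positivity

lemma diagonalNorm_sq (hρ : -1 < ρ) : diagonalNorm ρ ^ 2 = 2 / (1 + ρ) := by
  have : 0 < 1 + ρ := by linarith
  exact sq_sqrt (by positivity)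

lemma mahalanobisSq_eq_add (hρ : ρ ∈ Ioo (-1) 1) (x : ℝ × ℝ) :
    mahalanobisSq ρ x = diagonalNorm ρ ^ 2 * ((x.1 + x.2) / 2) ^ 2 +
      2 / (1 - ρ) * ((x.1 - x.2) / 2) ^ 2 := by
  have hadd : 0 < 1 + ρ := by linarith [hρ.1]
  have hsub : 0 < 1 - ρ := by linarith [hρ.2]
  rw [mahalanobisSq, diagonalNorm_sq hρ.1, show 1 - ρ ^ 2 = (1 + ρ) * (1 - ρ) by ring]
  field_simp
  ring

lemma mahalanobisSq_nonneg (hρ : ρ ∈ Ioo (-1) 1) (x : ℝ × ℝ) : 0 ≤ mahalanobisSq ρ x := by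
  have hsub : 0 < 1 - ρ := by linarith [hρ.2]
  rw [mahalanobisSq_eq_add hρ]
  positivity

lemma mahalanobisSq_inv_sqrt_smul_sub (hρ : ρ ∈ Ioo (-1) 1) {w : ℝ} (hw : 0 < w) (θ : ℝ)
    (x : ℝ × ℝ) :
    mahalanobisSq ρ ((√w)⁻¹ • (x - w • (θ, θ))) =
      mahalanobisSq ρ x / w - 2 * diagonalNorm ρ ^ 2 * θ * ((x.1 + x.2) / 2) +
        diagonalNorm ρ ^ 2 * θ ^ 2 * w := by
  have hinv : (√w)⁻¹ ^ 2 = w⁻¹ := by rw [inv_pow, sq_sqrt hw.le]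
  simp only [mahalanobisSq_eq_add hρ, Prod.smul_fst, Prod.smul_snd, Prod.fst_sub, Prod.snd_sub,
    smul_eq_mul, ← mul_add, ← mul_sub, mul_div_assoc, mul_pow, hinv]
  field_simp
  ring

end Correlation

section Gamma

open ProbabilityTheory

lemma ae_pos_gammaMeasure (a r : ℝ) : ∀ᵐ w ∂gammaMeasure a r, 0 < w := by
  have hpdf : Measurable (gammaPDF a r) := (measurable_gammaPDFReal a r).ennreal_ofReal
  rw [gammaMeasure, ae_withDensity_iff hpdf]
  filter_upwards [Measure.ae_ne volume (0 : ℝ)] with w hw0 hw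
  by_contra hneg
  exact hw (gammaPDF_of_neg (lt_of_le_of_ne (not_lt.1 hneg) hw0))

lemma integral_gammaMeasure {a r : ℝ} (ha : 0 < a) (hr : 0 < r) (f : ℝ → ℝ) :
    ∫ w, f w ∂gammaMeasure a r =
      ∫ w in Ioi 0, r ^ a / Gamma a * w ^ (a - 1) * exp (-(r * w)) * f w := by
  have hpdf : Measurable (gammaPDF a r) := (measurable_gammaPDFReal a r).ennreal_ofReal
  rw [gammaMeasure, integral_withDensity_eq_integral_toReal_smul hpdf
    (.of_forall fun _ => ENNReal.ofReal_lt_top), ← integral_Ici_eq_integral_Ioi,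
    ← integral_indicator measurableSet_Ici]
  refine integral_congr_ae (.of_forall fun w => ?_)
  simp only [gammaPDF, ENNReal.toReal_ofReal (gammaPDFReal_nonneg ha hr w)]
  simp only [gammaPDFReal, smul_eq_mul, indicator, mem_Ici, ite_mul, zero_mul]

lemma withDensity_ite_eq_gammaMeasure (a r : ℝ) :
    (volume.withDensity fun w => ENNReal.ofReal
      (if 0 < w then r ^ a * w ^ (a - 1) * exp (-r * w) / Gamma a else 0)) =
      gammaMeasure a r := by
  refine withDensity_congr_ae ?_
  filter_upwards [Measure.ae_ne volume (0 : ℝ)] with w hw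
  have hlt : 0 < w ↔ 0 ≤ w := ⟨le_of_lt, fun h => lt_of_le_of_ne h hw.symm⟩
  simp only [gammaPDF, gammaPDFReal, hlt]
  congr 2
  ring_nf

variable {p b ρ : ℝ}

lemma gaussian_mixture_exponent_eq (hρ : ρ ∈ Ioo (-1) 1) (b θ : ℝ) (x : ℝ × ℝ) {w : ℝ}
    (hw : 0 < w) :
    -(b ^ 2 / 2 * w) + -(mahalanobisSq ρ ((√w)⁻¹ • (x - w • (θ, θ))) / 2) =
      diagonalNorm ρ ^ 2 * θ * ((x.1 + x.2) / 2) +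
        (-(besselRate b θ ρ ^ 2 * w / 2) - √(mahalanobisSq ρ x) ^ 2 / (2 * w)) := by
  have hrate : besselRate b θ ρ ^ 2 = θ ^ 2 * diagonalNorm ρ ^ 2 + b ^ 2 :=
    sq_sqrt (by positivity)
  rw [mahalanobisSq_inv_sqrt_smul_sub hρ hw, hrate, sq_sqrt (mahalanobisSq_nonneg hρ x)]
  field_simp
  ring

lemma besselRate_pos (hb : 0 < b) (θ ρ : ℝ) : 0 < besselRate b θ ρ := by
  unfold besselRate
  positivity

theorem integral_gammaMeasure_bivariateNormalPDF (hp : 0 < p) (hb : 0 < b)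
    (hρ : ρ ∈ Ioo (-1) 1) (θ : ℝ) {x : ℝ × ℝ} (hx : 0 < mahalanobisSq ρ x) :
    ∫ w, w⁻¹ * bivariateNormalPDF ρ ((√w)⁻¹ • (x - w • (θ, θ))) ∂gammaMeasure p (b ^ 2 / 2) =
      equiSkewPDF p b θ ρ x := by
  rw [integral_gammaMeasure hp (by positivity), equiSkewPDF,
    ← integral_Ioi_rpow_mul_exp_eq_besselK _ (besselRate_pos hb θ ρ) (sqrt_pos.2 hx),
    ← integral_const_mul]
  refine setIntegral_congr_fun measurableSet_Ioi fun w (hw : 0 < w) => ?_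
  calc (b ^ 2 / 2) ^ p / Gamma p * w ^ (p - 1) * exp (-(b ^ 2 / 2 * w)) *
        (w⁻¹ * bivariateNormalPDF ρ ((√w)⁻¹ • (x - w • (θ, θ))))
      = (b ^ 2 / 2) ^ p / Gamma p * (2 * π * √(1 - ρ ^ 2))⁻¹ * w ^ (p - 1 - 1) *
          exp (-(b ^ 2 / 2 * w) + -(mahalanobisSq ρ ((√w)⁻¹ • (x - w • (θ, θ))) / 2)) := by
        rw [bivariateNormalPDF, exp_add, rpow_sub_one hw.ne' (p - 1)]
        ring
    _ = (b ^ 2 / 2) ^ p / Gamma p * (2 * π * √(1 - ρ ^ 2))⁻¹ *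
          exp (diagonalNorm ρ ^ 2 * θ * ((x.1 + x.2) / 2)) *
          (w ^ (p - 1 - 1) * exp (-(besselRate b θ ρ ^ 2 * w / 2) -
            √(mahalanobisSq ρ x) ^ 2 / (2 * w))) := by
        rw [gaussian_mixture_exponent_eq hρ b θ x hw, exp_add]
        ring

/-- The density of the equi-skew law as a mixture over the gamma distributed variance; unlike
`equiSkewPDF` it takes the value `∞` where it is singular. -/
noncomputable def equiSkewMixturePDF (p b θ ρ : ℝ) (x : ℝ × ℝ) : ENNReal :=
  ∫⁻ w, ENNReal.ofReal |(√w ^ Module.finrank ℝ (ℝ × ℝ))⁻¹| *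
    ENNReal.ofReal (bivariateNormalPDF ρ ((√w)⁻¹ • (x - w • (θ, θ)))) ∂gammaMeasure p (b ^ 2 / 2)

lemma measurable_equiSkewMixturePDF (p b θ ρ : ℝ) : Measurable (equiSkewMixturePDF p b θ ρ) := by
  have : SFinite (gammaMeasure p (b ^ 2 / 2)) := by
    unfold gammaMeasure
    infer_instance
  have hpdf := measurable_bivariateNormalPDF ρ
  exact Measurable.lintegral_prod_right' (f := fun y : (ℝ × ℝ) × ℝ =>
    ENNReal.ofReal |(√y.2 ^ Module.finrank ℝ (ℝ × ℝ))⁻¹| *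
      ENNReal.ofReal (bivariateNormalPDF ρ ((√y.2)⁻¹ • (y.1 - y.2 • (θ, θ))))) (by fun_prop)

lemma toReal_equiSkewMixturePDF (hp : 0 < p) (hb : 0 < b) (hρ : ρ ∈ Ioo (-1) 1) (θ : ℝ)
    {x : ℝ × ℝ} (hx : 0 < mahalanobisSq ρ x) :
    (equiSkewMixturePDF p b θ ρ x).toReal = equiSkewPDF p b θ ρ x := by
  have hpdf := measurable_bivariateNormalPDF ρ
  have hpos := ae_pos_gammaMeasure p (b ^ 2 / 2)
  rw [← integral_gammaMeasure_bivariateNormalPDF hp hb hρ θ hx,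
    integral_eq_lintegral_of_nonneg_ae _ (by fun_prop), equiSkewMixturePDF]
  · congr 1
    refine lintegral_congr_ae (hpos.mono fun w hw => ?_)
    simp only [Module.finrank_prod, Module.finrank_self, Nat.reduceAdd]
    rw [sq_sqrt hw.le, abs_of_pos (inv_pos.2 hw), ENNReal.ofReal_mul (inv_pos.2 hw).le]
  · exact hpos.mono fun w hw =>
      mul_nonneg (inv_pos.2 hw).le (bivariateNormalPDF_nonneg _ _)

variable {Ω : Type*} [MeasurableSpace Ω] {P : Measure Ω} [IsFiniteMeasure P]

theorem measureReal_preimage_eq_setIntegral_equiSkewPDF (hp : 0 < p) (hb : 0 < b)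
    (hρ : ρ ∈ Ioo (-1) 1) (θ : ℝ) {W : Ω → ℝ} {Z : Ω → ℝ × ℝ} (hW : Measurable W)
    (hZ : Measurable Z) (hWlaw : P.map W = gammaMeasure p (b ^ 2 / 2))
    (hZlaw : P.map Z = volume.withDensity fun z => ENNReal.ofReal (bivariateNormalPDF ρ z))
    (hindep : IndepFun W Z P) {A : Set (ℝ × ℝ)} (hA : MeasurableSet A)
    (hApos : ∀ x ∈ A, 0 < mahalanobisSq ρ x) :
    P.real ((fun ω => √(W ω) • Z ω + W ω • (θ, θ)) ⁻¹' A) =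
      ∫ x in A, equiSkewPDF p b θ ρ x := by
  have hlaw : P.map (fun ω => √(W ω) • Z ω + W ω • (θ, θ)) =
      volume.withDensity (equiSkewMixturePDF p b θ ρ) := by
    rw [map_sqrt_smul_add_smul_eq_withDensity volume hW hZ
      (hWlaw ▸ ae_pos_gammaMeasure p (b ^ 2 / 2))
      (measurable_bivariateNormalPDF ρ).ennreal_ofReal hZlaw hindep, hWlaw]
    rfl
  rw [← map_measureReal_apply (by fun_prop) hA,
    measureReal_eq_setIntegral_toReal (measurable_equiSkewMixturePDF p b θ ρ) hlaw hA]
  exact setIntegral_congr_fun hA fun x hx =>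
    toReal_equiSkewMixturePDF hp hb hρ θ (hApos x hx)

lemma aestronglyMeasurable_equiSkewPDF (hp : 0 < p) (hb : 0 < b) (hρ : ρ ∈ Ioo (-1) 1) (θ : ℝ)
    {A : Set (ℝ × ℝ)} (hA : MeasurableSet A) (hApos : ∀ x ∈ A, 0 < mahalanobisSq ρ x) :
    AEStronglyMeasurable (equiSkewPDF p b θ ρ) (volume.restrict A) := by
  refine (measurable_equiSkewMixturePDF p b θ ρ).ennreal_toReal.aestronglyMeasurable.congr ?_
  filter_upwards [ae_restrict_mem hA] with x hx
  exact toReal_equiSkewMixturePDF hp hb hρ θ (hApos x hx)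

end Gamma

section LogRatio

variable {ρ t : ℝ} {x : ℝ × ℝ}

lemma sqrt_sq_add_le {a e : ℝ} (ha : 0 < a) (he : 0 ≤ e) : √(a ^ 2 + e) ≤ a + e / (2 * a) := by
  refine sqrt_le_iff.2 ⟨by positivity, ?_⟩
  have hsq : (a + e / (2 * a)) ^ 2 = a ^ 2 + e + (e / (2 * a)) ^ 2 := by
    field_simp
    ring
  rw [hsq]
  exact le_add_of_nonneg_right (sq_nonneg _)

lemma sq_half_sub_le_of_mem_Iic (hx : x ∈ Iic (-t, -t)) :
    ((x.1 - x.2) / 2) ^ 2 ≤ (-((x.1 + x.2) / 2) - t) ^ 2 := by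
  have ⟨h1, h2⟩ : x.1 ≤ -t ∧ x.2 ≤ -t := hx
  rw [sq_le_sq, abs_of_nonneg (show 0 ≤ -((x.1 + x.2) / 2) - t by linarith), abs_le]
  constructor <;> linarith

lemma diagonalNorm_mul_le_sqrt_mahalanobisSq (hρ : ρ ∈ Ioo (-1) 1) (x : ℝ × ℝ) :
    diagonalNorm ρ * -((x.1 + x.2) / 2) ≤ √(mahalanobisSq ρ x) := by
  have hsub : 0 < 1 - ρ := by linarith [hρ.2]
  refine le_sqrt_of_sq_le ?_
  rw [mahalanobisSq_eq_add hρ, mul_pow, neg_sq]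
  exact le_add_of_nonneg_right (by positivity)

lemma sqrt_mahalanobisSq_le (hρ : ρ ∈ Ioo (-1) 1) (hx : x.1 + x.2 < 0) :
    √(mahalanobisSq ρ x) ≤ diagonalNorm ρ * -((x.1 + x.2) / 2) +
      2 / (1 - ρ) * ((x.1 - x.2) / 2) ^ 2 / (2 * (diagonalNorm ρ * -((x.1 + x.2) / 2))) := by
  have hsub : 0 < 1 - ρ := by linarith [hρ.2]
  have hk := diagonalNorm_pos hρ.1
  rw [mahalanobisSq_eq_add hρ, ← neg_sq ((x.1 + x.2) / 2), ← mul_pow]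
  exact sqrt_sq_add_le (mul_pos hk (by linarith)) (by positivity)

lemma diagonalNorm_mul_le_of_mem_Iic (hρ : ρ ∈ Ioo (-1) 1) (hx : x ∈ Iic (-t, -t)) :
    diagonalNorm ρ * t ≤ √(mahalanobisSq ρ x) := by
  have ⟨h1, h2⟩ : x.1 ≤ -t ∧ x.2 ≤ -t := hx
  have hk := diagonalNorm_pos hρ.1
  refine le_trans ?_ (diagonalNorm_mul_le_sqrt_mahalanobisSq hρ x)
  gcongr
  linarith

lemma mahalanobisSq_pos_of_mem_Iic (hρ : ρ ∈ Ioo (-1) 1) (ht : 0 < t) (hx : x ∈ Iic (-t, -t)) :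
    0 < mahalanobisSq ρ x :=
  sqrt_pos.1 ((mul_pos (diagonalNorm_pos hρ.1) ht).trans_le (diagonalNorm_mul_le_of_mem_Iic hρ hx))

lemma sqrt_mahalanobisSq_add_le (hρ : ρ ∈ Ioo (-1) 1) (ht : 0 < t) (hx : x ∈ Iic (-t, -t)) :
    √(mahalanobisSq ρ x) + diagonalNorm ρ * ((x.1 + x.2) / 2) ≤
      2 / (1 - ρ) / (2 * diagonalNorm ρ) * (-((x.1 + x.2) / 2) - t) ^ 2 / t := by
  have ⟨h1, h2⟩ : x.1 ≤ -t ∧ x.2 ≤ -t := hx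
  have hsub : 0 < 1 - ρ := by linarith [hρ.2]
  have hk := diagonalNorm_pos hρ.1
  calc √(mahalanobisSq ρ x) + diagonalNorm ρ * ((x.1 + x.2) / 2)
      ≤ 2 / (1 - ρ) * ((x.1 - x.2) / 2) ^ 2 / (2 * (diagonalNorm ρ * -((x.1 + x.2) / 2))) := by
        linarith [sqrt_mahalanobisSq_le hρ (show x.1 + x.2 < 0 by linarith)]
    _ ≤ 2 / (1 - ρ) * (-((x.1 + x.2) / 2) - t) ^ 2 / (2 * (diagonalNorm ρ * t)) := by
        have hdiff := sq_half_sub_le_of_mem_Iic hx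
        have hmean : t ≤ -((x.1 + x.2) / 2) := by linarith
        gcongr
    _ = 2 / (1 - ρ) / (2 * diagonalNorm ρ) * (-((x.1 + x.2) / 2) - t) ^ 2 / t := by
        field_simp

lemma sqrt_mahalanobisSq_div_le (hρ : ρ ∈ Ioo (-1) 1) (ht : 0 < t) (hx : x ∈ Iic (-t, -t)) :
    √(mahalanobisSq ρ x) / (diagonalNorm ρ * t) ≤
      1 + (1 + 2 / (1 - ρ) / (2 * diagonalNorm ρ ^ 2)) * (-((x.1 + x.2) / 2) - t) / t := by
  have ⟨h1, h2⟩ : x.1 ≤ -t ∧ x.2 ≤ -t := hx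
  have hsub : 0 < 1 - ρ := by linarith [hρ.2]
  have hk := diagonalNorm_pos hρ.1
  obtain ⟨r, hr⟩ : ∃ r, r = -((x.1 + x.2) / 2) - t := ⟨_, rfl⟩
  have hr0 : 0 ≤ r := by linarith
  have hmean : -((x.1 + x.2) / 2) = t + r := by linarith
  have hsqrt := sqrt_mahalanobisSq_le hρ (show x.1 + x.2 < 0 by linarith)
  have hdiff : ((x.1 - x.2) / 2) ^ 2 ≤ r * (t + r) :=
    (sq_half_sub_le_of_mem_Iic hx).trans (by rw [← hr]; nlinarith)
  rw [← hr, div_le_iff₀ (by positivity)]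
  rw [hmean] at hsqrt
  calc √(mahalanobisSq ρ x)
      ≤ diagonalNorm ρ * (t + r) +
          2 / (1 - ρ) * (r * (t + r)) / (2 * (diagonalNorm ρ * (t + r))) := by
        refine hsqrt.trans ?_
        gcongr
    _ = (1 + (1 + 2 / (1 - ρ) / (2 * diagonalNorm ρ ^ 2)) * r / t) * (diagonalNorm ρ * t) := by
        field_simp
        ring

lemma abs_mul_log_le {y q e : ℝ} (hy : 1 ≤ y) (hye : y ≤ 1 + e) : |q * log y| ≤ |q| * e := by
  rw [abs_mul, abs_of_nonneg (log_nonneg hy)]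
  gcongr
  linarith [log_le_sub_one_of_pos (show 0 < y by linarith)]

/-- The exponential decay rate `√(1 + α²) * γ` of the joint tail. -/
noncomputable def tailRate (b θ ρ : ℝ) : ℝ :=
  diagonalNorm ρ * (besselRate b θ ρ + θ * diagonalNorm ρ)

/-- The prefactor of the leading term `tailPrefactor p b θ ρ t * exp (tailRate b θ ρ * s)` of
`equiSkewPDF` on the quadrant `Iic (-t, -t)`, where `s` is the mean of the two coordinates. -/
noncomputable def tailPrefactor (p b θ ρ t : ℝ) : ℝ :=
  (b ^ 2 / 2) ^ p / Gamma p * (2 * π * √(1 - ρ ^ 2))⁻¹ *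
    (2 * √(π / 2) * besselRate b θ ρ ^ (1 / 2 - p) * (diagonalNorm ρ * t) ^ (p - 3 / 2))

/-- The logarithm of the ratio of `equiSkewPDF` to its leading term on `Iic (-t, -t)`. -/
noncomputable def logDensityRatio (p b θ ρ t : ℝ) (x : ℝ × ℝ) : ℝ :=
  (p - 3 / 2) * log (√(mahalanobisSq ρ x) / (diagonalNorm ρ * t)) -
    besselRate b θ ρ * (√(mahalanobisSq ρ x) + diagonalNorm ρ * ((x.1 + x.2) / 2)) +
    log (besselK (p - 1) (besselRate b θ ρ * √(mahalanobisSq ρ x)) /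
      (√(π / (2 * (besselRate b θ ρ * √(mahalanobisSq ρ x)))) *
        exp (-(besselRate b θ ρ * √(mahalanobisSq ρ x)))))

/-- The constant `L` in the estimates `logDensityRatio ≤ L * (1 + r) / t` and
`|logDensityRatio| ≤ L * (1 + r) ^ 2 / t`, where `r` is the distance of the mean of the
coordinates to `-t`. -/
noncomputable def logDensityRatioConst (p b θ ρ : ℝ) : ℝ :=
  |p - 3 / 2| * (1 + 2 / (1 - ρ) / (2 * diagonalNorm ρ ^ 2)) +
    besselRate b θ ρ * (2 / (1 - ρ) / (2 * diagonalNorm ρ)) +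
    ((p - 1) ^ 2 / 2 + 1 / 8) / (besselRate b θ ρ * diagonalNorm ρ)

lemma sub_add_le_and_abs_sub_add_le {A B C a b c r : ℝ} (ht : 0 < t) (ha : 0 ≤ a)
    (hb : 0 ≤ b) (hr : 0 ≤ r) (hA : |A| ≤ a * r / t) (hB₀ : 0 ≤ B) (hB : B ≤ b * r ^ 2 / t)
    (hC : |C| ≤ c / t) :
    A - B + C ≤ (a + b + c) * (1 + r) / t ∧ |A - B + C| ≤ (a + b + c) * (1 + r) ^ 2 / t := by
  have hc : 0 ≤ c := by
    have := (abs_nonneg C).trans hC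
    rwa [le_div_iff₀ ht, zero_mul] at this
  have hupper : a * r / t + c / t ≤ (a + b + c) * (1 + r) / t := by
    rw [← add_div]
    gcongr
    nlinarith [mul_nonneg hb hr, mul_nonneg hc hr]
  have hlower : a * r / t + b * r ^ 2 / t + c / t ≤ (a + b + c) * (1 + r) ^ 2 / t := by
    rw [← add_div, ← add_div]
    gcongr
    nlinarith [mul_nonneg ha hr, mul_nonneg hb hr, mul_nonneg hc hr,
      mul_nonneg ha (sq_nonneg r), mul_nonneg hc (sq_nonneg r)]
  rw [abs_le] at hA hC ⊢
  exact ⟨by linarith, by linarith, by linarith [hB₀.trans hB]⟩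

theorem logDensityRatio_le_and_abs_le {b : ℝ} (p : ℝ) (hb : 0 < b) (θ : ℝ) (hρ : ρ ∈ Ioo (-1) 1)
    (ht : 0 < t) (hx : x ∈ Iic (-t, -t)) :
    logDensityRatio p b θ ρ t x ≤
        logDensityRatioConst p b θ ρ * (1 + (-((x.1 + x.2) / 2) - t)) / t ∧
      |logDensityRatio p b θ ρ t x| ≤
        logDensityRatioConst p b θ ρ * (1 + (-((x.1 + x.2) / 2) - t)) ^ 2 / t := by
  have ⟨h1, h2⟩ : x.1 ≤ -t ∧ x.2 ≤ -t := hx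
  have hsub : 0 < 1 - ρ := by linarith [hρ.2]
  have hk := diagonalNorm_pos hρ.1
  have hβ := besselRate_pos hb θ ρ
  have hS := diagonalNorm_mul_le_of_mem_Iic hρ hx
  have hexcess := diagonalNorm_mul_le_sqrt_mahalanobisSq hρ x
  have hpower := abs_mul_log_le (q := p - 3 / 2) ((one_le_div (by positivity)).2 hS)
    (sqrt_mahalanobisSq_div_le hρ ht hx)
  have hbessel := abs_log_besselK_div_le (p - 1)
    (mul_pos hβ (sqrt_pos.2 (mahalanobisSq_pos_of_mem_Iic hρ ht hx)))
  refine sub_add_le_and_abs_sub_add_le ht (by positivity) (by positivity) (by linarith) ?_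
    (mul_nonneg hβ.le (by linarith)) ?_ ?_
  · exact hpower.trans_eq (by ring)
  · refine (mul_le_mul_of_nonneg_left (sqrt_mahalanobisSq_add_le hρ ht hx) hβ.le).trans_eq ?_
    ring
  · refine hbessel.trans ?_
    rw [div_div, mul_assoc]
    gcongr

end LogRatio

section LeadingTerm

variable {p b ρ t : ℝ} {x : ℝ × ℝ}

lemma tailRate_pos (hb : 0 < b) (θ : ℝ) (hρ : -1 < ρ) : 0 < tailRate b θ ρ := by
  have hlt : |θ * diagonalNorm ρ| < besselRate b θ ρ := by
    refine lt_sqrt_of_sq_lt ?_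
    rw [sq_abs, mul_pow]
    exact lt_add_of_pos_right _ (by positivity)
  exact mul_pos (diagonalNorm_pos hρ) (by linarith [(abs_lt.1 hlt).1])

lemma tailPrefactor_pos (hp : 0 < p) (hb : 0 < b) (θ : ℝ) (hρ : ρ ∈ Ioo (-1) 1) (ht : 0 < t) :
    0 < tailPrefactor p b θ ρ t := by
  have hk := diagonalNorm_pos hρ.1
  have hβ := besselRate_pos hb θ ρ
  have hρ' : 0 < 1 - ρ ^ 2 := by nlinarith [hρ.1, hρ.2]
  unfold tailPrefactor
  positivity

lemma div_rpow_sub_one_mul_sqrt (p : ℝ) {β S : ℝ} (hβ : 0 < β) (hS : 0 < S) :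
    (S / β) ^ (p - 1) * √(π / (2 * (β * S))) =
      √(π / 2) * β ^ (1 / 2 - p) * S ^ (p - 3 / 2) := by
  rw [← div_div, sqrt_div (by positivity), sqrt_mul hβ.le, sqrt_eq_rpow β, sqrt_eq_rpow S,
    div_rpow hS.le hβ.le, show 1 / 2 - p = -(p - 1 + 1 / 2) by ring,
    show p - 3 / 2 = p - 1 - 1 / 2 by ring]
  generalize p - 1 = m
  rw [rpow_neg hβ.le, rpow_add hβ, rpow_sub hS]
  field_simp

lemma equiSkewPDF_eq_mul_exp_logDensityRatio (p : ℝ) (hb : 0 < b) (θ : ℝ) (hρ : -1 < ρ)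
    (ht : 0 < t) (hx : 0 < mahalanobisSq ρ x) :
    equiSkewPDF p b θ ρ x = tailPrefactor p b θ ρ t *
      exp (tailRate b θ ρ * ((x.1 + x.2) / 2)) * exp (logDensityRatio p b θ ρ t x) := by
  have hk := diagonalNorm_pos hρ
  have hβ := besselRate_pos hb θ ρ
  have hS := sqrt_pos.2 hx
  have hK := besselK_pos (p - 1) (mul_pos hβ hS)
  unfold equiSkewPDF tailPrefactor logDensityRatio tailRate
  generalize √(mahalanobisSq ρ x) = S at hS hK ⊢
  generalize besselRate b θ ρ = β at hβ hK ⊢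
  generalize diagonalNorm ρ = k at hk ⊢
  have hpow := div_rpow_sub_one_mul_sqrt p hβ hS
  have hexp : exp (k * (β + θ * k) * ((x.1 + x.2) / 2)) =
      exp (k ^ 2 * θ * ((x.1 + x.2) / 2)) *
        (exp (β * (S + k * ((x.1 + x.2) / 2))) * exp (-(β * S))) := by
    rw [← exp_add, ← exp_add]
    ring_nf
  have hR : 0 < √(π / (2 * (β * S))) := by positivity
  rw [exp_add, exp_sub, exp_log (by positivity), mul_comm _ (log _),
    ← rpow_def_of_pos (by positivity), hexp]
  generalize √(π / (2 * (β * S))) = R at hpow hR ⊢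
  rw [eq_div_of_mul_eq hR.ne' hpow, div_rpow hS.le (by positivity)]
  generalize √(π / 2) = c
  field_simp

lemma abs_exp_sub_one_le_mul_exp {x a c : ℝ} (ha : |x| ≤ a) (hc : x ≤ c) (hc₀ : 0 ≤ c) :
    |exp x - 1| ≤ a * exp c := by
  have hlower := add_one_le_exp x
  have hupper : exp x - 1 ≤ x * exp x := by
    have := mul_le_mul_of_nonneg_right (add_one_le_exp (-x)) (exp_pos x).le
    rw [← exp_add, neg_add_cancel, exp_zero] at this
    linarith
  have ha₀ : 0 ≤ a := (abs_nonneg x).trans ha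
  have hac : a ≤ a * exp c := le_mul_of_one_le_right ha₀ (one_le_exp hc₀)
  have hmono : x * exp x ≤ a * exp c := by
    gcongr
    exact (le_abs_self x).trans ha
  rw [abs_le]
  exact ⟨by linarith [neg_abs_le x], by linarith⟩

lemma sq_le_mul_exp {u g : ℝ} (hu : 0 ≤ u) (hg : 0 < g) :
    u ^ 2 ≤ 32 / g ^ 2 * exp (g * u / 4) := by
  have h := quadratic_le_exp_of_nonneg (show 0 ≤ g * u / 4 by positivity)
  have hgu : 0 ≤ g * u := by positivity
  rw [div_mul_eq_mul_div, le_div_iff₀ (by positivity)]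
  linarith [mul_pow u g 2, mul_pow g u 2]

-- The polynomial growth of the relative error in the excess `r` is traded for half of the
-- exponential decay of the leading term.
lemma abs_exp_sub_one_le_of_quadratic {g L r E : ℝ} (hg : 0 < g) (hL : 0 ≤ L) (ht : 0 < t)
    (hLt : 4 * L / g ≤ t) (hr : 0 ≤ r) (hE : E ≤ L * (1 + r) / t)
    (hE' : |E| ≤ L * (1 + r) ^ 2 / t) :
    |exp E - 1| ≤ 32 * L / g ^ 2 / t * exp (g * (1 + r) / 2) := by
  have hgt : L / t ≤ g / 4 := by
    rw [div_le_iff₀ hg] at hLt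
    rw [div_le_iff₀ ht]
    linarith
  calc |exp E - 1| ≤ L * (1 + r) ^ 2 / t * exp (g * (1 + r) / 4) := by
        refine abs_exp_sub_one_le_mul_exp hE' (hE.trans ?_) (by positivity)
        calc L * (1 + r) / t = L / t * (1 + r) := by ring
          _ ≤ g / 4 * (1 + r) := by gcongr
          _ = g * (1 + r) / 4 := by ring
    _ ≤ L * (32 / g ^ 2 * exp (g * (1 + r) / 4)) / t * exp (g * (1 + r) / 4) := by
        gcongr
        exact sq_le_mul_exp (by positivity) hg
    _ = 32 * L / g ^ 2 / t * exp (g * (1 + r) / 2) := by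
        rw [show g * (1 + r) / 2 = g * (1 + r) / 4 + g * (1 + r) / 4 by ring, exp_add]
        ring

lemma logDensityRatioConst_pos (p : ℝ) (hb : 0 < b) (θ : ℝ) (hρ : ρ ∈ Ioo (-1) 1) :
    0 < logDensityRatioConst p b θ ρ := by
  have hsub : 0 < 1 - ρ := by linarith [hρ.2]
  have hk := diagonalNorm_pos hρ.1
  have hβ := besselRate_pos hb θ ρ
  unfold logDensityRatioConst
  positivity

/-- The constant `M` in the error term `M / |y|` of the tail asymptotic. -/
noncomputable def tailErrorConst (p b θ ρ : ℝ) : ℝ :=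
  4 * (32 * logDensityRatioConst p b θ ρ / tailRate b θ ρ ^ 2 * exp (tailRate b θ ρ / 2))

lemma tailErrorConst_pos (p : ℝ) (hb : 0 < b) (θ : ℝ) (hρ : ρ ∈ Ioo (-1) 1) :
    0 < tailErrorConst p b θ ρ := by
  have hL := logDensityRatioConst_pos p hb θ hρ
  have hg := tailRate_pos hb θ hρ.1
  unfold tailErrorConst
  positivity

theorem abs_equiSkewPDF_sub_le (hp : 0 < p) (hb : 0 < b) (θ : ℝ) (hρ : ρ ∈ Ioo (-1) 1)
    (ht : 0 < t) (hLt : 4 * logDensityRatioConst p b θ ρ / tailRate b θ ρ ≤ t)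
    (hx : x ∈ Iic (-t, -t)) :
    |equiSkewPDF p b θ ρ x -
        tailPrefactor p b θ ρ t * exp (tailRate b θ ρ * ((x.1 + x.2) / 2))| ≤
      tailPrefactor p b θ ρ t * (tailErrorConst p b θ ρ / 4 / t) *
        exp (-(tailRate b θ ρ / 2 * t)) * exp (tailRate b θ ρ / 2 * ((x.1 + x.2) / 2)) := by
  have ⟨h1, h2⟩ : x.1 ≤ -t ∧ x.2 ≤ -t := hx
  have hN := tailPrefactor_pos hp hb θ hρ ht
  obtain ⟨hle, habs⟩ := logDensityRatio_le_and_abs_le p hb θ hρ ht hx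
  have hratio := abs_exp_sub_one_le_of_quadratic (tailRate_pos hb θ hρ.1)
    (logDensityRatioConst_pos p hb θ hρ).le ht hLt (by linarith) hle habs
  rw [equiSkewPDF_eq_mul_exp_logDensityRatio p hb θ hρ.1 ht
    (mahalanobisSq_pos_of_mem_Iic hρ ht hx), ← mul_sub_one, abs_mul,
    abs_of_pos (by positivity)]
  refine (mul_le_mul_of_nonneg_left hratio (by positivity)).trans_eq ?_
  have hexp : exp (tailRate b θ ρ * ((x.1 + x.2) / 2)) *
      exp (tailRate b θ ρ * (1 + (-((x.1 + x.2) / 2) - t)) / 2) =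
      exp (tailRate b θ ρ / 2) * exp (-(tailRate b θ ρ / 2 * t)) *
        exp (tailRate b θ ρ / 2 * ((x.1 + x.2) / 2)) := by
    simp only [← exp_add]
    ring_nf
  rw [tailErrorConst]
  linear_combination
    tailPrefactor p b θ ρ t * (32 * logDensityRatioConst p b θ ρ / tailRate b θ ρ ^ 2 / t) * hexp

end LeadingTerm

section ExponentialIntegral

variable {a t : ℝ}

lemma exp_mul_half_add (a : ℝ) (x : ℝ × ℝ) :
    exp (a * ((x.1 + x.2) / 2)) = exp (a / 2 * x.1) * exp (a / 2 * x.2) := by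
  rw [← exp_add]
  ring_nf

lemma integrableOn_exp_mul_half_add_Iic (ha : 0 < a) (c : ℝ × ℝ) :
    IntegrableOn (fun x : ℝ × ℝ => exp (a * ((x.1 + x.2) / 2))) (Iic c) := by
  simp only [exp_mul_half_add]
  rw [IntegrableOn, Iic_prod_eq, Measure.volume_eq_prod, ← Measure.prod_restrict]
  exact (integrableOn_exp_mul_Iic (half_pos ha) _).mul_prod
    (integrableOn_exp_mul_Iic (half_pos ha) _)

lemma setIntegral_exp_mul_half_add_Iic (ha : 0 < a) (c : ℝ × ℝ) :
    ∫ x : ℝ × ℝ in Iic c, exp (a * ((x.1 + x.2) / 2)) =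
      (2 / a) ^ 2 * exp (a * ((c.1 + c.2) / 2)) := by
  simp only [exp_mul_half_add]
  rw [Iic_prod_eq, Measure.volume_eq_prod,
    setIntegral_prod_mul (fun u => exp (a / 2 * u)) (fun u => exp (a / 2 * u)),
    integral_exp_mul_Iic (half_pos ha), integral_exp_mul_Iic (half_pos ha)]
  field_simp

lemma abs_integral_div_sub_one_le {X : Type*} [MeasurableSpace X] {μ : Measure X} {F φ ψ : X → ℝ}
    (hF : AEStronglyMeasurable F μ) (hφ : Integrable φ μ) (hψ : Integrable ψ μ)
    (hpos : 0 < ∫ x, φ x ∂μ) (h : ∀ᵐ x ∂μ, |F x - φ x| ≤ ψ x) :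
    |(∫ x, F x ∂μ) / (∫ x, φ x ∂μ) - 1| ≤ (∫ x, ψ x ∂μ) / (∫ x, φ x ∂μ) := by
  have hdiff : Integrable (fun x => F x - φ x) μ :=
    hψ.mono' (hF.sub hφ.aestronglyMeasurable) h
  have hFint : Integrable F μ := by
    simpa only [Pi.add_def, sub_add_cancel] using hdiff.add hφ
  rw [div_sub_one hpos.ne', abs_div, abs_of_pos hpos, ← integral_sub hFint hφ]
  gcongr
  exact abs_integral_le_integral_abs.trans (integral_mono_ae hdiff.abs hψ h)

lemma abs_setIntegral_div_sub_one_le {F : ℝ × ℝ → ℝ} {N ε g : ℝ} (hN : 0 < N) (hg : 0 < g)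
    (hF : AEStronglyMeasurable F (volume.restrict (Iic (-t, -t))))
    (h : ∀ x ∈ Iic (-t, -t), |F x - N * exp (g * ((x.1 + x.2) / 2))| ≤
      N * ε * exp (-(g / 2 * t)) * exp (g / 2 * ((x.1 + x.2) / 2))) :
    |(∫ x in Iic (-t, -t), F x) / (N * (2 / g) ^ 2 * exp (-(g * t))) - 1| ≤ 4 * ε := by
  have hφ : ∫ x : ℝ × ℝ in Iic (-t, -t), N * exp (g * ((x.1 + x.2) / 2)) =
      N * (2 / g) ^ 2 * exp (-(g * t)) := by
    rw [integral_const_mul, setIntegral_exp_mul_half_add_Iic hg]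
    ring_nf
  have hψ : ∫ x : ℝ × ℝ in Iic (-t, -t),
      N * ε * exp (-(g / 2 * t)) * exp (g / 2 * ((x.1 + x.2) / 2)) =
      4 * ε * (N * (2 / g) ^ 2 * exp (-(g * t))) := by
    rw [integral_const_mul, setIntegral_exp_mul_half_add_Iic (half_pos hg),
      show -(g * t) = -(g / 2 * t) + g / 2 * ((-t + -t) / 2) by ring, exp_add]
    ring
  have hle := abs_integral_div_sub_one_le hF
    ((integrableOn_exp_mul_half_add_Iic hg _).const_mul N)
    ((integrableOn_exp_mul_half_add_Iic (half_pos hg) _).const_mul _)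
    (hφ ▸ by positivity) ((ae_restrict_mem measurableSet_Iic).mono h)
  rwa [hψ, hφ, mul_div_cancel_right₀ _ (by positivity)] at hle

theorem abs_setIntegral_equiSkewPDF_div_sub_one_le {p b ρ : ℝ} (hp : 0 < p) (hb : 0 < b) (θ : ℝ)
    (hρ : ρ ∈ Ioo (-1) 1) (ht : 0 < t)
    (hLt : 4 * logDensityRatioConst p b θ ρ / tailRate b θ ρ ≤ t) :
    |(∫ x in Iic (-t, -t), equiSkewPDF p b θ ρ x) / (tailPrefactor p b θ ρ t *
        (2 / tailRate b θ ρ) ^ 2 * exp (-(tailRate b θ ρ * t))) - 1| ≤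
      tailErrorConst p b θ ρ / t := by
  refine (abs_setIntegral_div_sub_one_le (tailPrefactor_pos hp hb θ hρ ht)
    (tailRate_pos hb θ hρ.1) (aestronglyMeasurable_equiSkewPDF hp hb hρ θ measurableSet_Iic
      fun x => mahalanobisSq_pos_of_mem_Iic hρ ht)
    fun x => abs_equiSkewPDF_sub_le hp hb θ hρ ht hLt).trans_eq ?_
  ring

end ExponentialIntegral

section Constants

variable {p b ρ t : ℝ}

lemma one_add_sqrt_div_sq (hρ : ρ ∈ Ioo (-1) 1) :
    1 + √((1 - ρ) / (1 + ρ)) ^ 2 = diagonalNorm ρ ^ 2 := by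
  have hadd : 0 < 1 + ρ := by linarith [hρ.1]
  have hsub : 0 < 1 - ρ := by linarith [hρ.2]
  rw [sq_sqrt (by positivity), diagonalNorm_sq hρ.1]
  field_simp
  ring

lemma sqrt_one_sub_sq (hρ : ρ ∈ Ioo (-1) 1) :
    √(1 - ρ ^ 2) = 2 * √((1 - ρ) / (1 + ρ)) / diagonalNorm ρ ^ 2 := by
  have hadd : 0 < 1 + ρ := by linarith [hρ.1]
  have hsub : 0 < 1 - ρ := by linarith [hρ.2]
  have hk := diagonalNorm_pos hρ.1
  rw [sqrt_eq_iff_mul_self_eq_of_pos (by positivity), ← sq, div_pow, mul_pow,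
    sq_sqrt (by positivity), diagonalNorm_sq hρ.1]
  field_simp
  ring

lemma tailPrefactor_mul_sq (hp : 0 < p) (hb : 0 < b) (θ : ℝ) (hρ : ρ ∈ Ioo (-1) 1)
    (ht : 0 < t) :
    tailPrefactor p b θ ρ t * (2 / tailRate b θ ρ) ^ 2 =
      (diagonalNorm ρ ^ 2) ^ ((2 * p - 3) / 4) /
        (√(2 * π) * (2 ^ (p - 1) * b ^ (-(2 * p)) * Gamma p) * besselRate b θ ρ ^ (p - 1 / 2) *
          √((1 - ρ) / (1 + ρ)) * (besselRate b θ ρ + θ * diagonalNorm ρ) ^ 2) *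
        t ^ (p - 3 / 2) := by
  have hk := diagonalNorm_pos hρ.1
  have hβ := besselRate_pos hb θ ρ
  have hα : 0 < √((1 - ρ) / (1 + ρ)) :=
    sqrt_pos.2 (div_pos (by linarith [hρ.2]) (by linarith [hρ.1]))
  have hsqrt : √(π / 2) = √(2 * π) / 2 := by
    rw [show π / 2 = 2 * π / 2 ^ 2 by ring, sqrt_div (by positivity), sqrt_sq two_pos.le]
  have hbp : (b ^ 2 / 2) ^ p = b ^ (2 * p) / 2 ^ p := by
    rw [div_rpow (by positivity) two_pos.le, ← rpow_natCast_mul hb.le, Nat.cast_two]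
  have hkq : (diagonalNorm ρ ^ 2) ^ ((2 * p - 3) / 4) = diagonalNorm ρ ^ (p - 3 / 2) := by
    rw [← rpow_natCast_mul hk.le]
    ring_nf
  have hβq : besselRate b θ ρ ^ (1 / 2 - p) = (besselRate b θ ρ ^ (p - 1 / 2))⁻¹ := by
    rw [← rpow_neg hβ.le, neg_sub]
  rw [tailPrefactor, tailRate, sqrt_one_sub_sq hρ, hsqrt, hbp, hkq, hβq, mul_rpow hk.le ht.le,
    rpow_sub_one two_ne_zero, rpow_neg hb.le]
  have hπ : √(2 * π) ^ 2 = 2 * π := sq_sqrt (by positivity)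
  field_simp
  rw [hπ]

end Constants

/-- Joint lower-tail asymptotic for the equi-skew GH model GH(0,R,(θ,θ),p,0,b):
with W ~ Gamma(p, b²/2) independent of the standardized bivariate normal (Z₁,Z₂) with
correlation ρ, X_i = θW + √W·Z_i, α = √((1−ρ)/(1+ρ)), β = √(θ²(1+α²)+b²),
γ = β + θ√(1+α²), K̄ = 2^{p−1}b^{−2p}Γ(p), C₃ = (1+α²)^{(2p−3)/4}/(√(2π)K̄β^{p−1/2}αγ²),
P(X₁ ≤ y, X₂ ≤ y) = C₃|y|^{p−3/2}e^{−√(1+α²)γ|y|}(1 + O(1/|y|)) as y → −∞. -/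
theorem stmt_14 (p b θ ρ : ℝ) (hp : 0 < p) (hb : 0 < b) (hρ : ρ ∈ Set.Ioo (-1 : ℝ) 1)
    {Ω : Type*} [MeasurableSpace Ω] (P : Measure Ω) [IsProbabilityMeasure P]
    (W Z₁ Z₂ : Ω → ℝ) (hW : Measurable W) (hZ : Measurable fun ω => (Z₁ ω, Z₂ ω))
    (hWlaw : Measure.map W P =
      volume.withDensity fun w : ℝ => ENNReal.ofReal
        (if 0 < w then
          (b ^ 2 / 2) ^ p * w ^ (p - 1) * Real.exp (-(b ^ 2 / 2) * w) / Real.Gamma p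
        else 0))
    (hZlaw : Measure.map (fun ω => (Z₁ ω, Z₂ ω)) P =
      volume.withDensity fun z : ℝ × ℝ => ENNReal.ofReal
        ((2 * Real.pi * Real.sqrt (1 - ρ ^ 2))⁻¹ *
          Real.exp (-(z.1 ^ 2 - 2 * ρ * z.1 * z.2 + z.2 ^ 2) / (2 * (1 - ρ ^ 2)))))
    (hindep : ProbabilityTheory.IndepFun W (fun ω => (Z₁ ω, Z₂ ω)) P)
    (X₁ X₂ : Ω → ℝ)
    (hX₁ : ∀ ω, X₁ ω = θ * W ω + Real.sqrt (W ω) * Z₁ ω)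
    (hX₂ : ∀ ω, X₂ ω = θ * W ω + Real.sqrt (W ω) * Z₂ ω)
    (α β γ Kbar C₃ : ℝ)
    (hα : α = Real.sqrt ((1 - ρ) / (1 + ρ)))
    (hβ : β = Real.sqrt (θ ^ 2 * (1 + α ^ 2) + b ^ 2))
    (hγ : γ = β + θ * Real.sqrt (1 + α ^ 2))
    (hK : Kbar = 2 ^ (p - 1) * b ^ (-(2 * p)) * Real.Gamma p)
    (hC₃ : C₃ = (1 + α ^ 2) ^ ((2 * p - 3) / 4) /
      (Real.sqrt (2 * Real.pi) * Kbar * β ^ (p - 1 / 2) * α * γ ^ 2)) :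
    ∃ M > (0 : ℝ), ∃ y₀ < (0 : ℝ), ∀ y ≤ y₀,
      |(P {ω | X₁ ω ≤ y ∧ X₂ ω ≤ y}).toReal /
          (C₃ * |y| ^ (p - 3 / 2) * Real.exp (-(Real.sqrt (1 + α ^ 2) * γ) * |y|)) - 1|
        ≤ M / |y| := by
  have hα' : 1 + α ^ 2 = diagonalNorm ρ ^ 2 := by rw [hα, one_add_sqrt_div_sq hρ]
  have hk : √(1 + α ^ 2) = diagonalNorm ρ := by rw [hα', sqrt_sq (diagonalNorm_pos hρ.1).le]
  have hβ' : β = besselRate b θ ρ := by rw [hβ, hα', besselRate]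
  have hrate : √(1 + α ^ 2) * γ = tailRate b θ ρ := by rw [hγ, hk, hβ', tailRate]
  have ht₀ : 0 < 4 * logDensityRatioConst p b θ ρ / tailRate b θ ρ :=
    div_pos (mul_pos four_pos (logDensityRatioConst_pos p hb θ hρ)) (tailRate_pos hb θ hρ.1)
  refine ⟨tailErrorConst p b θ ρ, tailErrorConst_pos p hb θ hρ, _, neg_neg_iff_pos.2 ht₀,
    fun y hy => ?_⟩
  obtain ⟨t, rfl⟩ := neg_surjective y
  have hLt := neg_le_neg_iff.1 hy
  have ht : 0 < t := ht₀.trans_le hLt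
  have hprob : P.real {ω | X₁ ω ≤ -t ∧ X₂ ω ≤ -t} =
      ∫ x in Iic (-t, -t), equiSkewPDF p b θ ρ x := by
    rw [withDensity_ite_eq_gammaMeasure] at hWlaw
    simp only [← bivariateNormalPDF_eq] at hZlaw
    rw [← measureReal_preimage_eq_setIntegral_equiSkewPDF hp hb hρ θ hW hZ hWlaw hZlaw hindep
      measurableSet_Iic fun x => mahalanobisSq_pos_of_mem_Iic hρ ht]
    simp [preimage, hX₁, hX₂, mul_comm, add_comm]
  have hconst : C₃ * t ^ (p - 3 / 2) = tailPrefactor p b θ ρ t * (2 / tailRate b θ ρ) ^ 2 := by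
    rw [tailPrefactor_mul_sq hp hb θ hρ ht, hC₃, hK, hα', hγ, hk, hβ', hα]
  rw [abs_neg, abs_of_pos ht, ← measureReal_def, hprob, hconst, hrate, neg_mul]
  exact abs_setIntegral_equiSkewPDF_div_sub_one_le hp hb θ hρ ht hLt
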